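/- arXiv:2504.15428 — 4 statements merged into one kernel-verified Lean document; each statement's English description precedes it below -/
import Mathlib

section
/- Let q ≠ 3 be a rational prime, let F be a finite extension of ℚ_q whose residue field κ_F satisfies |κ_F| ≡ 1 (mod 3), and let E be a quadratic field extension of F. Then the map O_E^×/(O_E^×)³ → O_F^×/(O_F^×)³ induced by the norm N_{E/F} has trivial kernel; that is, every unit u ∈ O_E^× with N_{E/F}(u) ∈ (O_F^×)³ satisfies u ∈ (O_E^×)³. -/
open IsLocalRing Polynomial

theorem aux_complete {R : Type} [CommRing R] [IsNoetherianRing R] (I : Ideal R)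
    [IsAdicComplete I R] (M : Type) [AddCommGroup M] [Module R M] [Module.Finite R M] :
    IsAdicComplete I M := by
  rw [← AdicCompletion.of_bijective_iff]
  have h1 := AdicCompletion.ofTensorProduct_bijective_of_finite_of_isNoetherian I M
  let e := (TensorProduct.lid R M).symm ≪≫ₗ
    (TensorProduct.congr (AdicCompletion.ofLinearEquiv I R) (LinearEquiv.refl R M))
  have : (AdicCompletion.of I M : M → _) = (AdicCompletion.ofTensorProduct I M) ∘ e := by
    funext x
    simp [e, AdicCompletion.ofTensorProduct_tmul]
    rw [show (AdicCompletion.of I R) 1 = 1 from rfl, one_smul]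
  rw [this]
  exact h1.comp e.bijective

theorem aux_finite (q : ℕ) [Fact q.Prime] (S : Type) [CommRing S] [Algebra ℤ_[q] S]
    [Module.Finite ℤ_[q] S] :
    Finite (S ⧸ (maximalIdeal ℤ_[q]).map (algebraMap ℤ_[q] S)) := by
  let m := maximalIdeal ℤ_[q]
  let J := m.map (algebraMap ℤ_[q] S)
  let _ : Algebra (ℤ_[q] ⧸ m) (S ⧸ J) := Ideal.Quotient.algebraQuotientOfLEComap Ideal.le_comap_map
  have : IsScalarTower ℤ_[q] (ℤ_[q] ⧸ m) (S ⧸ J) := IsScalarTower.of_algebraMap_eq fun x => rfl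
  have : Module.Finite (ℤ_[q] ⧸ m) (S ⧸ J) := Module.Finite.of_restrictScalars_finite ℤ_[q] _ _
  have : Finite (ℤ_[q] ⧸ m) :=
    Finite.of_equiv _ (PadicInt.residueField (p := q)).symm.toEquiv
  exact Module.finite_of_finite (ℤ_[q] ⧸ m)

theorem aux_idem {M : Type*} [Monoid M] [Finite M] (x : M) : ∃ n, 0 < n ∧ x ^ n * x ^ n = x ^ n := by
  obtain ⟨i, j, hne, h⟩ := Finite.exists_ne_map_eq_of_infinite (fun n : ℕ => x ^ n)
  wlog hij : i < j generalizing i j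
  · exact this j i hne.symm h.symm (by omega)
  obtain ⟨d, rfl⟩ := Nat.exists_eq_add_of_lt hij
  have key : ∀ k, x ^ (i + k * (d + 1)) = x ^ i := by
    intro k
    induction k with
    | zero => simp
    | succ k ih =>
      rw [show i + (k + 1) * (d + 1) = (i + d + 1) + k * (d + 1) by ring, pow_add, ← h, ← pow_add, ih]
  refine ⟨(i + 1) * (d + 1), by positivity, ?_⟩
  obtain ⟨e, he⟩ : ∃ e, (i + 1) * (d + 1) = i + e := ⟨i * d + d + 1, by ring⟩
  rw [← pow_add]
  conv_lhs => rw [show (i + 1) * (d + 1) + (i + 1) * (d + 1) = (i + (i + 1) * (d + 1)) + e by omega]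
  rw [pow_add, key, ← pow_add, he]

theorem aux_local (S : Type*) [CommRing S] [IsDomain S] (I : Ideal S) [HenselianRing S I]
    [Finite (S ⧸ I)] : IsLocalRing S := by
  have hjac : I ≤ Ideal.jacobson ⊥ := HenselianRing.jac
  refine IsLocalRing.of_isUnit_or_isUnit_one_sub_self fun x => ?_
  obtain ⟨n, hn, hx⟩ := aux_idem (Ideal.Quotient.mk I x)
  have hx' : x ^ n * x ^ n - x ^ n ∈ I := by
    rw [← Ideal.Quotient.eq_zero_iff_mem]; simp [hx]
  obtain ⟨a, ha, hax⟩ := HenselianRing.is_henselian (I := I) (X ^ 2 - X : S[X])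
    (by monicity!) (x ^ n) (by simpa [sq] using hx') (by
      refine IsUnit.of_mul_eq_one (Ideal.Quotient.mk I (2 * x ^ n - 1)) ?_
      rw [← map_mul, ← map_one (Ideal.Quotient.mk I), Ideal.Quotient.eq]
      simp only [derivative_sub, derivative_X_pow, derivative_X, eval_sub, eval_mul, eval_pow, eval_X, eval_one, eval_C]
      convert I.mul_mem_left 4 hx' using 1
      push_cast
      ring)
  have : a * (a - 1) = 0 := by
    have := ha.eq_zero
    simp at this
    linear_combination this
  rcases mul_eq_zero.mp this with h | h
  · right
    have h1 : x ^ n ∈ I := by simpa [h] using hax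
    have h2 : x ∈ Ideal.jacobson (⊥ : Ideal S) :=
      Ideal.isRadical_jacobson _ ⟨n, hjac h1⟩
    have := Ideal.mem_jacobson_bot.mp h2 (-1)
    convert this using 1; ring
  · left
    have h1 : x ^ n - 1 ∈ I := by
      have := I.neg_mem hax
      rw [sub_eq_zero.mp h] at this
      simpa using this
    have := Ideal.mem_jacobson_bot.mp (hjac h1) 1
    rw [mul_one, sub_add_cancel] at this
    exact (isUnit_pow_iff hn.ne').mp this

theorem aux_lift (q : ℕ) [Fact q.Prime] (hq3 : q ≠ 3) (S : Type*) [CommRing S] [IsLocalRing S]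
    (I : Ideal S) [HenselianRing S I] [Finite (S ⧸ I)] (hqI : (q : S) ∈ I) (u b : S) (hu : IsUnit u)
    (h : u - b ^ 3 ∈ maximalIdeal S) : ∃ c, u = c ^ 3 := by
  have hIM : I ≤ maximalIdeal S := by
    refine IsLocalRing.le_maximalIdeal ?_
    rintro rfl
    have := Ideal.mem_jacobson_bot.mp (HenselianRing.jac (R := S) (I := ⊤) (Submodule.mem_top (x := 1))) (-1)
    simp at this
  have : Nontrivial (S ⧸ I) := Ideal.Quotient.nontrivial_iff.mpr (ne_top_of_le_ne_top (Ideal.IsPrime.ne_top') hIM)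
  have : IsLocalRing (S ⧸ I) := .of_surjective' _ Ideal.Quotient.mk_surjective
  have : CharP (S ⧸ I) q := (CharP.charP_iff_prime_eq_zero Fact.out).mpr (by
    rw [← map_natCast (Ideal.Quotient.mk I)]; exact Ideal.Quotient.eq_zero_iff_mem.mpr hqI)
  have hb : IsUnit b := by
    by_contra hb
    have : b ^ 3 ∈ maximalIdeal S := Ideal.pow_mem_of_mem _ ((mem_maximalIdeal _).mpr hb) 3 (by norm_num)
    exact ((mem_maximalIdeal _).mp ((Submodule.sub_mem_iff_left _ this).mp h)) hu
  obtain ⟨b, rfl⟩ := hb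
  obtain ⟨u, rfl⟩ := hu
  let v : (S ⧸ I)ˣ := Units.map (Ideal.Quotient.mk I : S →* S ⧸ I) (u * (b ^ 3)⁻¹)
  obtain ⟨n, hn, hx⟩ := aux_idem (((v : S ⧸ I) - 1))
  have hm : (u : S) * ↑(b ^ 3)⁻¹ - 1 ∈ maximalIdeal S := by
    have := (maximalIdeal S).mul_mem_right (↑(b ^ 3)⁻¹ : S) h
    convert this using 1
    rw [sub_mul, ← Units.val_pow_eq_pow_val, Units.mul_inv]
  have hnil : ((v : S ⧸ I) - 1) ^ n = 0 := by
    have hnu : ¬ IsUnit (((v : S ⧸ I) - 1) ^ n) := by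
      rw [isUnit_pow_iff hn.ne']
      intro hh
      have : (v : S ⧸ I) - 1 = Ideal.Quotient.mk I ((u : S) * ↑(b ^ 3)⁻¹ - 1) := by simp [v]
      rw [this] at hh
      have := isLocalHom_of_le_jacobson_bot I HenselianRing.jac
      exact (mem_maximalIdeal _).mp hm (isUnit_of_map_unit _ _ hh)
    have hu1 : IsUnit (((v : S ⧸ I) - 1) ^ n - 1) := by
      have := IsLocalRing.isUnit_or_isUnit_one_sub_self (((v : S ⧸ I) - 1) ^ n)
      rw [← neg_sub]
      exact (this.resolve_left hnu).neg
    refine hu1.mul_left_cancel ?_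
    rw [sub_mul, hx]; simp
  have hv : v ^ (q ^ n) = 1 := by
    ext
    have h2 : ((v : S ⧸ I) - 1) ^ (q ^ n) = 0 :=
      pow_eq_zero_of_le (Nat.lt_pow_self (Fact.out : q.Prime).one_lt).le hnil
    rw [sub_pow_char_pow, one_pow, sub_eq_zero] at h2
    simpa using h2
  have hcop : Nat.Coprime (q ^ n) 3 := Nat.Coprime.pow_left _ ((Nat.coprime_primes Fact.out Nat.prime_three).mpr hq3)
  obtain ⟨w, hw⟩ : ∃ w : (S ⧸ I)ˣ, v = w ^ 3 := by
    have hbz := Nat.gcd_eq_gcd_ab (q ^ n) 3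
    rw [hcop.gcd_eq_one] at hbz
    refine ⟨v ^ (Nat.gcdB (q ^ n) 3), ?_⟩
    calc v = v ^ (((1 : ℕ) : ℤ)) := by simp
      _ = _ := by
        rw [hbz, zpow_add, zpow_mul, zpow_natCast, hv, one_zpow, one_mul, mul_comm, zpow_mul]
        exact zpow_natCast _ 3
  obtain ⟨c, hc⟩ := Ideal.Quotient.mk_surjective (w : S ⧸ I)
  have hc3 : (c * b) ^ 3 - u ∈ I := by
    rw [← Ideal.Quotient.eq, map_pow, map_mul, hc, mul_pow, ← Units.val_pow_eq_pow_val, ← hw]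
    simp only [v, Units.coe_map, MonoidHom.coe_coe, Units.val_mul, ← map_pow, ← map_mul]
    rw [mul_assoc, ← Units.val_pow_eq_pow_val, Units.inv_mul, mul_one]
  have h3 : IsUnit (3 : S ⧸ I) := by
    have : ((3 : ℕ) : S ⧸ I) = 3 := by norm_num
    rw [← this]
    have := (Nat.isCoprime_iff_coprime.mpr ((Nat.coprime_primes Fact.out Nat.prime_three).mpr hq3)).map (Int.castRingHom (S ⧸ I))
    simpa [isCoprime_zero_left] using this
  obtain ⟨a, ha, -⟩ := HenselianRing.is_henselian (I := I) (X ^ 3 - C (u : S) : S[X])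
    (by monicity!) (c * b) (by simpa using hc3) (by
      simp only [derivative_sub, derivative_X_pow, derivative_C, eval_sub, eval_mul, eval_pow, eval_X, eval_zero, eval_C, sub_zero, map_mul, map_pow, hc]
      refine IsUnit.mul (by rwa [show ((3 : ℕ) : S) = 3 from rfl, show (Ideal.Quotient.mk I) (3 : S) = 3 from map_ofNat _ 3]) (IsUnit.pow _ (IsUnit.mul w.isUnit (b.isUnit.map _))))
  refine ⟨a, ?_⟩
  have := ha.eq_zero
  simp at this
  linear_combination -this

theorem aux_cubic {K : Type*} [Field K] [Finite K] (ω : K) (hω : ω ^ 2 + ω + 1 = 0) (h3 : (3 : K) ≠ 0)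
    (n : ℕ) : (∃ n, Nat.card Kˣ = 3 * n ∧ ∀ u : Kˣ, u ^ n = 1 → ∃ w, u = w ^ 3) := by
  have h1 : ω ^ 3 = 1 := by linear_combination (ω - 1) * hω
  have hne : ω ≠ 1 := by
    rintro rfl
    apply h3
    linear_combination hω
  let z : Kˣ := Units.ofPowEqOne ω 3 h1 (by norm_num)
  have hz : orderOf z = 3 := by
    refine orderOf_eq_prime ?_ ?_
    · ext; simpa [z] using h1
    · intro h; apply hne; simpa [z] using congrArg Units.val h
  obtain ⟨n, hn⟩ : 3 ∣ Nat.card Kˣ := hz ▸ orderOf_dvd_natCard z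
  refine ⟨n, hn, fun u hu => ?_⟩
  obtain ⟨g, hg⟩ := IsCyclic.exists_generator (α := Kˣ)
  obtain ⟨j, rfl⟩ := mem_powers_iff_mem_zpowers.mpr (hg u)
  have ho : orderOf g = 3 * n := by rw [orderOf_eq_card_of_forall_mem_zpowers hg, hn]
  have hpos : 0 < Nat.card Kˣ := Nat.card_pos
  simp only [← pow_mul] at hu
  have h2 := orderOf_dvd_of_pow_eq_one hu
  rw [ho] at h2
  obtain ⟨k, rfl⟩ := Nat.dvd_of_mul_dvd_mul_right (by omega) h2
  exact ⟨g ^ k, by simp only [← pow_mul]; rw [mul_comm]⟩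

theorem aux_res {S : Type*} [CommRing S] [IsLocalRing S] [Finite (ResidueField S)]
    (σ : S ≃+* S) (ω : S) (hω : ω ^ 2 + ω + 1 ∈ maximalIdeal S) (hσ : σ ω = ω)
    (h3 : (3 : S) ∉ maximalIdeal S) (u w : S) (hw : IsUnit w) (huw : u * σ u = w ^ 3) :
    ∃ b, u - b ^ 3 ∈ maximalIdeal S := by
  have hM : ∀ x, x ∈ maximalIdeal S ↔ residue S x = 0 := fun x => (residue_eq_zero_iff x).symm
  have hω' : residue S ω ^ 2 + residue S ω + 1 = 0 := by
    rw [hM] at hω; simpa using hω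
  have h3' : (3 : ResidueField S) ≠ 0 := by
    intro h; apply h3; rw [hM]; exact (map_ofNat (residue S) 3).trans h
  have hu : IsUnit u := isUnit_of_mul_isUnit_left (huw ▸ hw.pow 3)
  obtain ⟨n, hn, hcube⟩ := aux_cubic (residue S ω) hω' h3' 0
  have hcard : ∀ x : S, IsUnit x → residue S x ^ (3 * n) = 1 := by
    intro x hx
    obtain ⟨x, rfl⟩ := hx
    have := pow_card_eq_one' (x := Units.map (residue S : S →* ResidueField S) x)
    rw [hn] at this
    simpa using congrArg Units.val this
  have hσM : ∀ x, x ∈ maximalIdeal S → σ x ∈ maximalIdeal S := by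
    intro x hx
    rw [mem_maximalIdeal, mem_nonunits_iff] at hx ⊢
    rwa [MulEquiv.isUnit_map]
  -- the power is congruent to a fixed element
  have key : ∃ c : S, σ c = c ∧ u ^ n - c ∈ maximalIdeal S := by
    have h := hcard u hu
    have : (residue S u ^ n - 1) * ((residue S u ^ n - residue S ω) * (residue S u ^ n - residue S ω ^ 2)) = 0 := by
      have h' : (residue S u ^ n) ^ 3 = 1 := by rw [← pow_mul, mul_comm, h]
      generalize residue S u ^ n = x at *
      generalize residue S ω = y at *
      grind
    rcases mul_eq_zero.mp this with h | h
    · exact ⟨1, map_one _, by rw [hM]; simpa using h⟩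
    rcases mul_eq_zero.mp h with h | h
    · exact ⟨ω, hσ, by rw [hM]; simpa using h⟩
    · exact ⟨ω ^ 2, by simp [hσ], by rw [hM]; simpa using h⟩
  obtain ⟨c, hc, huc⟩ := key
  have h1 := hσM _ huc
  rw [hM] at huc h1
  simp only [map_sub, map_pow, hc, sub_eq_zero] at huc h1
  have h2 : residue S c ^ 2 = 1 := by
    have := hcard w hw
    rw [pow_mul, ← map_pow, ← huw, map_mul, mul_pow, huc, h1] at this
    rw [sq, this]
  have h4 : residue S c ^ 3 = 1 := by
    rw [← huc, ← pow_mul, mul_comm, hcard u hu]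
  have h5 : residue S u ^ n = 1 := by
    rw [huc]; linear_combination h4 - residue S c * h2
  obtain ⟨u, rfl⟩ := hu
  obtain ⟨v, hv⟩ := hcube (Units.map (residue S : S →* ResidueField S) u) (by ext; simpa using h5)
  obtain ⟨b, hb⟩ := residue_surjective (v : ResidueField S)
  refine ⟨b, ?_⟩
  rw [hM, map_sub, map_pow, hb, sub_eq_zero]
  simpa using congrArg Units.val hv

theorem aux_omega {S : Type*} [CommRing S] [IsLocalRing S]
    (h : Nat.card (ResidueField S) % 3 = 1) : ∃ ω : S, ω ^ 2 + ω + 1 ∈ maximalIdeal S := by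
  have hf : Finite (ResidueField S) := Nat.finite_of_card_ne_zero (by omega)
  have h1 : 3 ∣ Nat.card (ResidueField S)ˣ := by
    rw [Nat.card_units]; omega
  have : Fact (Nat.Prime 3) := ⟨Nat.prime_three⟩
  obtain ⟨x, hx⟩ := exists_prime_orderOf_dvd_card' 3 h1
  obtain ⟨ω, hω⟩ := residue_surjective (x : ResidueField S)
  refine ⟨ω, ?_⟩
  rw [← residue_eq_zero_iff]
  simp only [map_add, map_pow, map_one, hω]
  have h3 : (x : ResidueField S) ^ 3 = 1 := by
    have := pow_orderOf_eq_one x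
    rw [hx] at this
    simpa using congrArg Units.val this
  have hne : (x : ResidueField S) - 1 ≠ 0 := by
    intro h
    have : x = 1 := by ext; simpa [sub_eq_zero] using h
    simp [this] at hx
  refine mul_left_cancel₀ hne ?_
  linear_combination h3

/-- Let `q ≠ 3` be a rational prime, `F` a finite extension of `ℚ_q` whose
residue field has cardinality `≡ 1 (mod 3)`, and `E` a quadratic extension of `F`.
Then the norm-induced map `O_E^×/(O_E^×)³ → O_F^×/(O_F^×)³` has trivial kernel. -/
theorem stmt_0 (q : ℕ) [Fact q.Prime] (hq3 : q ≠ 3)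
    (F E : Type) [Field F] [Field E]
    [Algebra ℚ_[q] F] [FiniteDimensional ℚ_[q] F]
    [Algebra ℤ_[q] F] [IsScalarTower ℤ_[q] ℚ_[q] F]
    [Algebra F E] (hquad : Module.finrank F E = 2)
    [Algebra ℚ_[q] E] [IsScalarTower ℚ_[q] F E]
    [Algebra ℤ_[q] E] [IsScalarTower ℤ_[q] ℚ_[q] E]
    [IsLocalRing (integralClosure ℤ_[q] F)]
    (hres : Nat.card (IsLocalRing.ResidueField (integralClosure ℤ_[q] F)) % 3 = 1)
    (u : (integralClosure ℤ_[q] E)ˣ)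
    (hu : ∃ w : (integralClosure ℤ_[q] F)ˣ,
        Algebra.norm F ((↑(u : (integralClosure ℤ_[q] E)) : E))
          = ((↑(w : (integralClosure ℤ_[q] F)) : F)) ^ 3) :
    ∃ w : (integralClosure ℤ_[q] E)ˣ, u = w ^ 3 := by
  obtain ⟨w, hw⟩ := hu
  have hFE : FiniteDimensional F E := FiniteDimensional.of_finrank_pos (by omega)
  have hQE : FiniteDimensional ℚ_[q] E := FiniteDimensional.trans ℚ_[q] F E
  have hcF : CharZero F := charZero_of_injective_algebraMap (algebraMap ℚ_[q] F).injective
  have hcE : CharZero E := charZero_of_injective_algebraMap (algebraMap ℚ_[q] E).injective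
  have htow : IsScalarTower ℤ_[q] F E := IsScalarTower.of_algebraMap_eq fun x => by
    rw [IsScalarTower.algebraMap_apply ℤ_[q] ℚ_[q] E, IsScalarTower.algebraMap_apply ℤ_[q] ℚ_[q] F,
      IsScalarTower.algebraMap_apply ℚ_[q] F E]
  let S := integralClosure ℤ_[q] E
  have hfin : Module.Finite ℤ_[q] S := IsIntegralClosure.finite ℤ_[q] ℚ_[q] E S
  let I : Ideal S := (maximalIdeal ℤ_[q]).map (algebraMap ℤ_[q] S)
  have hcomp : IsAdicComplete I S :=
    (IsAdicComplete.map_algebraMap_iff (S := S) (maximalIdeal ℤ_[q]) S).mpr (aux_complete _ _)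
  have hfinI : Finite (S ⧸ I) := aux_finite q S
  have hloc : IsLocalRing S := aux_local S I
  have hqI : (q : S) ∈ I := by
    have : (q : ℤ_[q]) ∈ maximalIdeal ℤ_[q] := by
      rw [PadicInt.maximalIdeal_eq_span_p]; exact Ideal.mem_span_singleton_self _
    simpa using Ideal.mem_map_of_mem (algebraMap ℤ_[q] S) this
  have hIM : I ≤ maximalIdeal S := by
    refine IsLocalRing.le_maximalIdeal ?_
    intro h
    have := Ideal.mem_jacobson_bot.mp (HenselianRing.jac (R := S) (I := I)
      (h ▸ Submodule.mem_top (x := 1))) (-1)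
    simp at this
  have hfinK : Finite (ResidueField S) :=
    Finite.of_surjective (Ideal.Quotient.factor hIM) (Ideal.Quotient.factor_surjective hIM)
  have h3 : (3 : S) ∉ maximalIdeal S := by
    intro h
    have hc := (Nat.isCoprime_iff_coprime.mpr ((Nat.coprime_primes Fact.out Nat.prime_three).mpr hq3)).map
      (Int.castRingHom S)
    obtain ⟨a, b, hab⟩ := hc
    have : (1 : S) ∈ maximalIdeal S := by
      rw [← hab]
      refine Ideal.add_mem _ (Ideal.mul_mem_left _ _ ?_) (Ideal.mul_mem_left _ _ ?_)
      · simpa using hIM hqI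
      · simpa using h
    exact (mem_maximalIdeal _).mp this isUnit_one
  obtain ⟨ω, hω⟩ := aux_omega hres
  -- embedding of the rings of integers
  let f : integralClosure ℤ_[q] F →ₐ[ℤ_[q]] S := (IsScalarTower.toAlgHom ℤ_[q] F E).mapIntegralClosure
  have hf : ∀ x, (f x : E) = algebraMap F E x := fun x => rfl
  have hfM : ∀ x, x ∈ maximalIdeal (integralClosure ℤ_[q] F) → f x ∈ maximalIdeal S := by
    intro x hx
    rw [mem_maximalIdeal, mem_nonunits_iff] at hx ⊢
    contrapose! hx
    obtain ⟨y, hy⟩ := hx.exists_right_inv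
    have hy' : algebraMap F E x * (y : E) = 1 := by
      rw [← hf]; exact congrArg Subtype.val hy
    have hx0 : (x : F) ≠ 0 := by
      intro h; rw [h] at hy'; simp at hy'
    have hyx : (y : E) = algebraMap F E ((x : F)⁻¹) := by
      rw [map_inv₀]; exact eq_inv_of_mul_eq_one_right hy'
    have hint : IsIntegral ℤ_[q] ((x : F)⁻¹) := by
      rw [← isIntegral_algebraMap_iff (algebraMap F E).injective, ← hyx]
      exact y.2
    exact IsUnit.of_mul_eq_one ⟨(x : F)⁻¹, hint⟩ (Subtype.ext (mul_inv_cancel₀ hx0))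
  -- the nontrivial automorphism
  have hquadext : Algebra.IsQuadraticExtension F E := ⟨hquad⟩
  have hgal : IsGalois F E := inferInstance
  have hcardG : Nat.card Gal(E/F) = 2 := by rw [IsGalois.card_aut_eq_finrank, hquad]
  obtain ⟨σ, hσ⟩ : ∃ σ : Gal(E/F), ∀ x : E, algebraMap F E (Algebra.norm F x) = x * σ x := by
    classical
    obtain ⟨σ, hσ1, hσ⟩ := (Nat.card_eq_two_iff' (1 : Gal(E/F))).mp hcardG
    refine ⟨σ, fun x => ?_⟩
    rw [Algebra.norm_eq_prod_automorphisms]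
    have : (Finset.univ : Finset Gal(E/F)) = {1, σ} := by
      ext τ
      simp only [Finset.mem_univ, Finset.mem_insert, Finset.mem_singleton, true_iff]
      by_cases h : τ = 1
      · exact Or.inl h
      · exact Or.inr (hσ τ h)
    rw [this, Finset.prod_pair (Ne.symm hσ1)]
    rfl
  let σS : S ≃ₐ[ℤ_[q]] S := (σ.restrictScalars ℤ_[q]).mapIntegralClosure
  have hσS : ∀ x, (σS x : E) = σ x := fun x => rfl
  obtain ⟨b, hb⟩ := aux_res (σS : S ≃+* S) (f ω) (by simpa using hfM _ hω)
    (Subtype.ext (by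
      change σ (algebraMap F E ω) = algebraMap F E ω
      exact σ.commutes _)) h3 u (f w) (w.isUnit.map f) (Subtype.ext (by
      change (u : E) * σ u = (algebraMap F E w) ^ 3
      rw [← hσ, hw, map_pow]))
  obtain ⟨c, hc⟩ := aux_lift q hq3 S I hqI u b u.isUnit hb
  have hcu : IsUnit c := (isUnit_pow_iff (n := 3) (by norm_num)).mp (hc ▸ u.isUnit)
  obtain ⟨c, rfl⟩ := hcu
  exact ⟨c, Units.ext (by simpa using hc)⟩
end

section
/- Let F be a finite extension of ℚ₃ containing a primitive cube root of unity, set d = [F:ℚ₃], and let E be a quadratic field extension of F. Then the kernel of the map O_E^×/(O_E^×)³ → O_F^×/(O_F^×)³ induced by the norm N_{E/F} has order exactly 3^d. (In the paper's application d = 6, giving order 3⁶.) -/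
lemma aux_dvd {O : Type*} [CommRing O] (n : ℕ) (x y : O) :
    (x ≡ y [SMOD ((Ideal.span {(3:O)}) ^ n • ⊤ : Submodule O O)]) ↔ (3:O)^n ∣ x - y := by
  rw [SModEq.sub_mem, smul_eq_mul, Ideal.mul_top, Ideal.span_singleton_pow,
    Ideal.mem_span_singleton]

lemma aux_complete_Z : IsAdicComplete (Ideal.span {(3:ℤ_[3])}) ℤ_[3] := by
  have h : IsLocalRing.maximalIdeal ℤ_[3] = Ideal.span {(3:ℤ_[3])} := by
    simpa using PadicInt.maximalIdeal_eq_span_p (p := 3)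
  rw [← h]; infer_instance

lemma aux_complete_s1 {O : Type*} [CommRing O] [Algebra ℤ_[3] O] {ι : Type*} [Fintype ι]
    (b : Module.Basis ι ℤ_[3] O) : IsAdicComplete (Ideal.span {(3:O)}) O := by
  have hZ := aux_complete_Z
  have key : ∀ (n : ℕ) (x : O), (3:O)^n ∣ x ↔ ∀ i, (3:ℤ_[3])^n ∣ b.repr x i := by
    intro n x
    constructor
    · rintro ⟨y, rfl⟩ i
      have : (3:O)^n * y = (3:ℤ_[3])^n • y := by rw [Algebra.smul_def]; simp only [map_pow, map_ofNat]
      rw [this]; simp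
    · intro h
      choose c hc using h
      refine ⟨∑ i, c i • b i, ?_⟩
      have : (3:O)^n * (∑ i, c i • b i) = (3:ℤ_[3])^n • (∑ i, c i • b i) := by
        rw [Algebra.smul_def]; simp only [map_pow, map_ofNat]
      rw [this, Finset.smul_sum]
      conv_lhs => rw [← b.sum_repr x]
      refine Finset.sum_congr rfl fun i _ => ?_
      rw [hc, mul_smul]
  have hH : IsHausdorff (Ideal.span {(3:O)}) O := by
    refine ⟨fun x hx => ?_⟩
    have : b.repr x = 0 := by
      ext i
      refine hZ.toIsHausdorff.haus _ fun n => ?_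
      rw [aux_dvd, sub_zero]
      have := hx n
      rw [aux_dvd, sub_zero] at this
      exact (key n x).1 this i
    simpa using this
  have hP : IsPrecomplete (Ideal.span {(3:O)}) O := by
    refine ⟨fun f hf => ?_⟩
    have h1 : ∀ i, ∃ L : ℤ_[3], ∀ n, (b.repr (f n) i) ≡ L
        [SMOD ((Ideal.span {(3:ℤ_[3])}) ^ n • ⊤ : Submodule ℤ_[3] ℤ_[3])] := by
      intro i
      refine hZ.toIsPrecomplete.prec (f := fun n => b.repr (f n) i) ?_
      intro m n hmn
      have := hf hmn
      rw [aux_dvd] at this ⊢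
      simpa using (key m _).1 this i
    choose L hL using h1
    refine ⟨∑ i, L i • b i, fun n => ?_⟩
    rw [aux_dvd, key]
    intro i
    have := hL i n
    rw [aux_dvd] at this
    classical
    simpa [Finsupp.single_apply] using this
  exact { toIsHausdorff := hH, toIsPrecomplete := hP }

lemma aux_card {O : Type*} [CommRing O] [Algebra ℤ_[3] O] {ι : Type*} [Fintype ι]
    (b : Module.Basis ι ℤ_[3] O) :
    Nat.card (O ⧸ Ideal.span {(3:O)}) = 3 ^ Fintype.card ι := by
  let φ : O →+ (ι → ZMod 3) :=
    { toFun := fun x i => PadicInt.toZMod (b.repr x i)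
      map_zero' := by ext; simp
      map_add' := by intros; ext; simp }
  have hs : Function.Surjective φ := by
    intro y
    choose c hc using fun i => ZMod.ringHom_surjective (PadicInt.toZMod (p := 3)) (y i)
    refine ⟨∑ i, c i • b i, ?_⟩
    ext i
    classical
    have h : b.repr (∑ i, c i • b i) i = c i := by simp [Finsupp.single_apply]
    change PadicInt.toZMod (b.repr (∑ i, c i • b i) i) = y i
    rw [h, hc]
  have hk : φ.ker = (Ideal.span {(3:O)}).toAddSubgroup := by
    ext x
    have h3 : ∀ z : ℤ_[3], PadicInt.toZMod z = 0 ↔ (3:ℤ_[3]) ∣ z := by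
      intro z
      rw [← RingHom.mem_ker, PadicInt.ker_toZMod, PadicInt.maximalIdeal_eq_span_p,
        Ideal.mem_span_singleton]; simp
    rw [AddMonoidHom.mem_ker, Submodule.mem_toAddSubgroup, Ideal.mem_span_singleton]
    constructor
    · intro h
      have h' : ∀ i, (3:ℤ_[3]) ∣ b.repr x i := fun i => (h3 _).1 (congrFun h i)
      choose c hc using h'
      refine ⟨∑ i, c i • b i, ?_⟩
      have : (3:O) * (∑ i, c i • b i) = (3:ℤ_[3]) • (∑ i, c i • b i) := by
        rw [Algebra.smul_def]; simp only [map_pow, map_ofNat]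
      rw [this, Finset.smul_sum]
      conv_lhs => rw [← b.sum_repr x]
      refine Finset.sum_congr rfl fun i _ => ?_
      rw [hc, mul_smul]
    · rintro ⟨y, rfl⟩
      ext i
      refine (h3 _).2 ?_
      have : (3:O) * y = (3:ℤ_[3]) • y := by rw [Algebra.smul_def]; simp only [map_pow, map_ofNat]
      rw [this]; simp
  have h := AddSubgroup.index_ker φ
  rw [hk, AddMonoidHom.range_eq_top.2 hs] at h
  have h2 : Nat.card (O ⧸ Ideal.span {(3:O)}) = (Ideal.span {(3:O)}).toAddSubgroup.index := rfl
  rw [h2, h]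
  simp [Nat.card_pi]

lemma aux_cube {O : Type*} [CommRing O] [IsAdicComplete (Ideal.span {(3:O)}) O] (y : O) :
    ∃ x : O, (1 + 3 * x)^3 = 1 + 9 * y := by
  open Polynomial in
  have hH : HenselianRing O (Ideal.span {(3:O)}) := inferInstance
  let f : O[X] := X^3 + (- X^2 - C (3*y) * X - C (3*y^2))
  have hf : f.Monic := by
    refine Polynomial.monic_X_pow_add ?_
    refine lt_of_le_of_lt (b := 2) ?_ (by norm_num)
    compute_degree
  obtain ⟨z, hz, hz1⟩ := hH.is_henselian f hf 1 (by
      rw [Ideal.mem_span_singleton]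
      exact ⟨-y-y^2, by simp [f]; ring⟩) (by
      have : Ideal.Quotient.mk (Ideal.span {(3:O)}) (f.derivative.eval 1) = 1 := by
        rw [← map_one (Ideal.Quotient.mk (Ideal.span {(3:O)})), Ideal.Quotient.eq,
          Ideal.mem_span_singleton]
        exact ⟨-y, by simp [f, Polynomial.derivative_pow]; ring⟩
      rw [this]; exact isUnit_one)
  rw [Ideal.mem_span_singleton] at hz1
  obtain ⟨t, ht⟩ := hz1
  have hu : IsUnit z := by
    have := hH.jac (Ideal.mem_span_singleton_self (3:O))
    rw [Ideal.mem_jacobson_bot] at this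
    have := this t
    rwa [← ht, sub_add_cancel] at this
  obtain ⟨u, rfl⟩ := hu
  have hz' : (u:O)^3 - u^2 - 3*y*u - 3*y^2 = 0 := by
    have := hz.eq_zero
    simp [f] at this
    linear_combination this
  refine ⟨y * (u⁻¹ : Oˣ), ?_⟩
  have hui : (u:O) * (u⁻¹ : Oˣ) = 1 := u.mul_inv
  generalize ((u⁻¹ : Oˣ) : O) = v at *
  generalize (u:O) = z at *
  have e : (9 * y) * (1 - v - 3 * y * v^2 - 3*y^2*v^3) = 0 := by
    have e1 : 1 - v - 3 * y * v^2 - 3*y^2*v^3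
      = v^3 * (z^3 - z^2 - 3*y*z - 3*y^2) + (1 - (z*v)^3) - v * (1 - (z*v)^2) 
        - 3*y*v^2*(1-z*v) := by ring
    rw [e1, hz', hui]; ring
  linear_combination -e

lemma aux_index {O : Type*} [CommRing O] [IsDomain O] [CharZero O]
    [hc : IsAdicComplete (Ideal.span {(3:O)}) O] (n : ℕ)
    (hn : Nat.card (O ⧸ Ideal.span {(3:O)}) = 3 ^ n) (ζ : O) (hζ : IsPrimitiveRoot ζ 3) :
    (powMonoidHom 3 : Oˣ →* Oˣ).range.index = 3 ^ (n+1) := by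
  have hjac : ∀ x : O, IsUnit (3 * x + 1) := by
    intro x
    have := IsAdicComplete.le_jacobson_bot (Ideal.span {(3:O)}) (Ideal.mem_span_singleton_self (3:O))
    rw [Ideal.mem_jacobson_bot] at this
    exact this x
  have h30 : (3:O) ≠ 0 := by norm_num
  set π := Units.map (Ideal.Quotient.mk (Ideal.span {(3:O)})).toMonoidHom
  set ρ := Units.map (Ideal.Quotient.mk (Ideal.span {(9:O)})).toMonoidHom
  set V := π.ker with hV
  set W := ρ.ker with hW
  have mV : ∀ u : Oˣ, u ∈ V ↔ (3:O) ∣ u - 1 := by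
    intro u
    rw [hV, MonoidHom.mem_ker, Units.ext_iff]
    simp only [π, Units.coe_map, Units.val_one]
    rw [← Ideal.mem_span_singleton, ← Ideal.Quotient.eq, map_one]; rfl
  have mW : ∀ u : Oˣ, u ∈ W ↔ (9:O) ∣ u - 1 := by
    intro u
    rw [hW, MonoidHom.mem_ker, Units.ext_iff]
    simp only [ρ, Units.coe_map, Units.val_one]
    rw [← Ideal.mem_span_singleton, ← Ideal.Quotient.eq, map_one]; rfl
  have hWV : W ≤ V := by
    intro u hu
    rw [mV]; rw [mW] at hu
    exact dvd_trans ⟨3, by norm_num⟩ hu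
  have hmap : V.map (powMonoidHom 3 : Oˣ →* Oˣ) = W := by
    ext w
    rw [Subgroup.mem_map, mW]
    constructor
    · rintro ⟨u, hu, rfl⟩
      obtain ⟨x, hx⟩ := (mV u).1 hu
      have hx' : (u:O) = 1 + 3 * x := by linear_combination hx
      refine ⟨3*x^3+3*x^2+x, ?_⟩
      simp [hx']; ring
    · rintro ⟨y, hy⟩
      obtain ⟨x, hx⟩ := aux_cube y
      obtain ⟨u, hu⟩ := hjac x
      refine ⟨u, (mV u).2 ⟨x, by rw [hu]; ring⟩, ?_⟩
      ext
      simp only [powMonoidHom_apply, Units.val_pow_eq_pow_val, hu]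
      linear_combination hx - hy
  have hker : Nat.card (powMonoidHom 3 : Oˣ →* Oˣ).ker = 3 := by
    have : (powMonoidHom 3 : Oˣ →* Oˣ).ker = rootsOfUnity 3 O := by
      ext u; simp [MonoidHom.mem_ker, mem_rootsOfUnity]
    rw [this]
    simpa [Nat.card_eq_fintype_card] using hζ.card_rootsOfUnity
  have hinf : V ⊓ (powMonoidHom 3 : Oˣ →* Oˣ).ker = ⊥ := by
    rw [eq_bot_iff]
    rintro u ⟨hu, hu3⟩
    obtain ⟨x, hx⟩ := (mV u).1 hu
    have hx' : (u:O) = 1 + 3 * x := by linear_combination hx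
    have h3 : (u:O)^3 = 1 := by
      have : u^3 = 1 := hu3
      rw [← Units.val_pow_eq_pow_val, this, Units.val_one]
    have h4 : 9 * (x * (3 * (x^2+x) + 1)) = 0 := by
      rw [hx'] at h3; linear_combination h3
    have hx0 : x = 0 := by
      rcases mul_eq_zero.1 h4 with h | h
      · norm_num at h
      · rcases mul_eq_zero.1 h with h | h
        · exact h
        · exact absurd h (hjac _).ne_zero
    rw [Subgroup.mem_bot]; ext; simp [hx', hx0]
  have hfin : Finite (O ⧸ Ideal.span {(3:O)}) := by
    apply Nat.finite_of_card_ne_zero; rw [hn]; positivity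
  have hVi : V.index ≠ 0 := by
    rw [hV, Subgroup.index_ker]
    exact Nat.card_pos.ne'
  have hrel : W.relIndex V = 3 ^ n := by
    let ψ : Multiplicative O →* (O ⧸ Ideal.span {(9:O)})ˣ :=
      { toFun := fun x => 
          ⟨Ideal.Quotient.mk _ (1 + 3 * x.toAdd), Ideal.Quotient.mk _ (1 - 3 * x.toAdd), by
            rw [← map_mul, ← map_one (Ideal.Quotient.mk _), Ideal.Quotient.eq, 
              Ideal.mem_span_singleton]
            exact ⟨-x.toAdd^2, by ring⟩, by
            rw [← map_mul, ← map_one (Ideal.Quotient.mk _), Ideal.Quotient.eq, 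
              Ideal.mem_span_singleton]
            exact ⟨-x.toAdd^2, by ring⟩⟩
        map_one' := by ext; simp
        map_mul' := by
          intro x y
          ext
          simp only [Units.val_mul]
          rw [← map_mul, Ideal.Quotient.eq, Ideal.mem_span_singleton]
          exact ⟨-x.toAdd*y.toAdd, by simp only [toAdd_mul]; ring⟩ }
    have hr : V.map ρ = ψ.range := by
      ext a
      constructor
      · rintro ⟨u, hu, rfl⟩
        obtain ⟨x, hx⟩ := (mV u).1 hu
        have hx' : (u:O) = 1 + 3 * x := by linear_combination hx
        refine ⟨Multiplicative.ofAdd x, ?_⟩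
        ext
        simp [ψ, ρ, hx']
      · rintro ⟨x, rfl⟩
        obtain ⟨u, hu⟩ := hjac x.toAdd
        refine ⟨u, (mV u).2 ⟨x.toAdd, by rw [hu]; ring⟩, ?_⟩
        ext
        simp [ψ, ρ, hu, add_comm]
    have hk : ψ.ker = AddSubgroup.toSubgroup (Ideal.span {(3:O)}).toAddSubgroup := by
      ext x
      rw [MonoidHom.mem_ker, Units.ext_iff]
      change Ideal.Quotient.mk _ (1 + 3 * x.toAdd) = 1 ↔ x.toAdd ∈ Ideal.span {(3:O)}
      rw [← map_one (Ideal.Quotient.mk _), Ideal.Quotient.eq, Ideal.mem_span_singleton,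
        Ideal.mem_span_singleton]
      have : (1 + 3 * x.toAdd - 1 : O) = 3 * x.toAdd := by ring
      rw [this, show (9:O) = 3 * 3 by norm_num, mul_dvd_mul_iff_left h30]
    have hW' : W = (⊥ : Subgroup _).comap ρ := by rw [hW]; rfl
    rw [hW', Subgroup.relIndex_comap, hr, Subgroup.relIndex_bot_left, ← Subgroup.index_ker, hk,
      AddSubgroup.index_toSubgroup]
    exact hn
  have e1 := Subgroup.index_map V (powMonoidHom 3 : Oˣ →* Oˣ)
  rw [hmap] at e1
  have e2 := Subgroup.relIndex_mul_index hWV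
  have e3 := Subgroup.relIndex_mul_index (le_sup_left : V ≤ V ⊔ (powMonoidHom 3 : Oˣ →* Oˣ).ker)
  rw [Subgroup.relIndex_sup_left, ← Subgroup.inf_relIndex_right, hinf,
    Subgroup.relIndex_bot_left, hker] at e3
  rw [hrel, e1, ← e3] at e2
  have hne : (V ⊔ (powMonoidHom 3 : Oˣ →* Oˣ).ker).index ≠ 0 := by
    intro h; rw [h] at e3; exact hVi (by omega)
  apply mul_left_cancel₀ hne
  rw [← e2]; ring

lemma aux_field (K : Type) [Field K] [Algebra ℚ_[3] K] [FiniteDimensional ℚ_[3] K]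
    [Algebra ℤ_[3] K] [IsScalarTower ℤ_[3] ℚ_[3] K]
    (ζ : K) (hζ : IsPrimitiveRoot ζ 3) :
    (powMonoidHom 3 : (integralClosure ℤ_[3] K)ˣ →* (integralClosure ℤ_[3] K)ˣ).range.index
      = 3 ^ (Module.finrank ℚ_[3] K + 1) := by
  have : CharZero K := charZero_of_injective_algebraMap (algebraMap ℚ_[3] K).injective
  have hinj : Function.Injective (algebraMap ℤ_[3] K) := by
    rw [IsScalarTower.algebraMap_eq ℤ_[3] ℚ_[3] K]
    exact (algebraMap ℚ_[3] K).injective.comp (IsFractionRing.injective _ _)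
  have : Module.IsTorsionFree ℤ_[3] K := by
    have : FaithfulSMul ℤ_[3] K := (faithfulSMul_iff_algebraMap_injective _ _).2 hinj
    infer_instance
  have : Module.Finite ℤ_[3] (integralClosure ℤ_[3] K) := 
    IsIntegralClosure.finite ℤ_[3] ℚ_[3] K _
  have : Module.Free ℤ_[3] (integralClosure ℤ_[3] K) := 
    IsIntegralClosure.module_free ℤ_[3] ℚ_[3] K _
  have hr : Module.finrank ℤ_[3] (integralClosure ℤ_[3] K) = Module.finrank ℚ_[3] K := 
    IsIntegralClosure.rank ℤ_[3] ℚ_[3] K _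
  let b := Module.finBasis ℤ_[3] (integralClosure ℤ_[3] K)
  have := aux_complete_s1 b
  have hcard := aux_card b
  rw [Fintype.card_fin, hr] at hcard
  have hint : IsIntegral ℤ_[3] ζ := hζ.isIntegral (by norm_num) |>.tower_top
  refine aux_index _ hcard ⟨ζ, hint⟩ ?_
  exact IsPrimitiveRoot.of_map_of_injective (f := (integralClosure ℤ_[3] K).val) hζ
    Subtype.val_injective

theorem stmt_1 (F E : Type) [Field F] [Field E]
    [Algebra ℚ_[3] F] [FiniteDimensional ℚ_[3] F]
    [Algebra ℤ_[3] F] [IsScalarTower ℤ_[3] ℚ_[3] F]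
    (ζ : F) (hζ : IsPrimitiveRoot ζ 3)
    [Algebra F E] (hquad : Module.finrank F E = 2)
    [Algebra ℚ_[3] E] [IsScalarTower ℚ_[3] F E]
    [Algebra ℤ_[3] E] [IsScalarTower ℤ_[3] ℚ_[3] E] :
    Nat.card {ξ : (integralClosure ℤ_[3] E)ˣ ⧸
        (powMonoidHom 3 : (integralClosure ℤ_[3] E)ˣ →* (integralClosure ℤ_[3] E)ˣ).range //
        ∃ u : (integralClosure ℤ_[3] E)ˣ, QuotientGroup.mk u = ξ ∧
          ∃ w : (integralClosure ℤ_[3] F)ˣ,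
            Algebra.norm F ((↑(u : (integralClosure ℤ_[3] E)) : E))
              = ((↑(w : (integralClosure ℤ_[3] F)) : F)) ^ 3}
      = 3 ^ Module.finrank ℚ_[3] F := by
  have hfE : FiniteDimensional F E := Module.finite_of_finrank_pos (by omega)
  have : FiniteDimensional ℚ_[3] E := Module.Finite.trans F E
  have hrk : Module.finrank ℚ_[3] E = Module.finrank ℚ_[3] F * 2 := by
    rw [← hquad, Module.finrank_mul_finrank]
  have : IsScalarTower ℤ_[3] F E := by
    refine IsScalarTower.of_algebraMap_eq fun x => ?_
    rw [IsScalarTower.algebraMap_apply ℤ_[3] ℚ_[3] E, IsScalarTower.algebraMap_apply ℚ_[3] F E,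
      ← IsScalarTower.algebraMap_apply ℤ_[3] ℚ_[3] F]
  have hF := aux_field F ζ hζ
  have hE := aux_field E (algebraMap F E ζ) (hζ.map_of_injective (algebraMap F E).injective)
  set PF := (powMonoidHom 3 : (integralClosure ℤ_[3] F)ˣ →* (integralClosure ℤ_[3] F)ˣ).range
    with hPF
  set PE := (powMonoidHom 3 : (integralClosure ℤ_[3] E)ˣ →* (integralClosure ℤ_[3] E)ˣ).range
    with hPE
  let N0 : (integralClosure ℤ_[3] E) →* (integralClosure ℤ_[3] F) :=
    { toFun := fun x => ⟨Algebra.norm F (x:E), Algebra.isIntegral_norm F x.2⟩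
      map_one' := by ext; simp
      map_mul' := by intros; ext; simp }
  let N := Units.map N0
  have hle : PE ≤ PF.comap N := by
    rintro _ ⟨u, rfl⟩
    exact ⟨N u, by simp⟩
  let φ := QuotientGroup.map PE PF N hle
  have hsurj : Function.Surjective φ := by
    intro y
    obtain ⟨w, rfl⟩ := QuotientGroup.mk_surjective y
    let i0 : (integralClosure ℤ_[3] F) →* (integralClosure ℤ_[3] E) :=
      { toFun := fun x => ⟨algebraMap F E (x:F), x.2.algebraMap⟩
        map_one' := by ext; simp
        map_mul' := by intros; ext; simp }
    have hNi : ∀ v, N (Units.map i0 v) = v ^ 2 := by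
      intro v
      ext
      simp [N, N0, i0, Algebra.norm_algebraMap, hquad]
    refine ⟨QuotientGroup.mk (Units.map i0 w⁻¹), ?_⟩
    change QuotientGroup.mk (N (Units.map i0 w⁻¹)) = _
    rw [hNi, QuotientGroup.eq]
    refine ⟨w, ?_⟩
    simp only [powMonoidHom_apply]
    group
  have hset : ∀ ξ : (integralClosure ℤ_[3] E)ˣ ⧸ PE, 
      (∃ u : (integralClosure ℤ_[3] E)ˣ, QuotientGroup.mk u = ξ ∧
          ∃ w : (integralClosure ℤ_[3] F)ˣ,
            Algebra.norm F ((↑(u : (integralClosure ℤ_[3] E)) : E))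
              = ((↑(w : (integralClosure ℤ_[3] F)) : F)) ^ 3) ↔ ξ ∈ φ.ker := by
    have hmem : ∀ u : (integralClosure ℤ_[3] E)ˣ, 
        (QuotientGroup.mk u : _ ⧸ PE) ∈ φ.ker ↔ ∃ w : (integralClosure ℤ_[3] F)ˣ,
            Algebra.norm F ((↑(u : (integralClosure ℤ_[3] E)) : E))
              = ((↑(w : (integralClosure ℤ_[3] F)) : F)) ^ 3 := by
      intro u
      rw [MonoidHom.mem_ker]
      change ((N u : (integralClosure ℤ_[3] F)ˣ) : _ ⧸ PF) = 1 ↔ _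
      rw [QuotientGroup.eq_one_iff]
      refine exists_congr fun w => ?_
      rw [Units.ext_iff, Subtype.ext_iff]
      exact eq_comm
    intro ξ
    constructor
    · rintro ⟨u, rfl, h⟩
      exact (hmem u).2 h
    · intro h
      obtain ⟨u, rfl⟩ := QuotientGroup.mk_surjective ξ
      exact ⟨u, rfl, (hmem u).1 h⟩
  have hcong := Nat.card_congr (Equiv.subtypeEquivRight hset)
  rw [hcong]
  have h1 := Subgroup.card_mul_index φ.ker
  rw [Subgroup.index_ker, MonoidHom.range_eq_top.2 hsurj, Subgroup.card_top] at h1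
  change _ * PF.index = PE.index at h1
  rw [hF, hE, hrk] at h1
  apply mul_right_cancel₀ (b := 3 ^ (Module.finrank ℚ_[3] F + 1)) (by positivity)
  rw [← pow_add]
  refine Eq.trans h1 ?_
  congr 1; ring
end

section
/- Let q be a rational prime, let F be a finite extension of ℚ_q, and let E be a quadratic field extension of F with normalized valuation v_E. Let x ∈ E^× be such that N_{E/F}(x) ∈ (F^×)³. Then there exists a unit u ∈ O_E^× with N_{E/F}(u) ∈ (O_F^×)³ and x·u^{-1} ∈ (E^×)³ if and only if v_E(x) ≡ 0 (mod 3). -/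
/-- Let `q` be a rational prime, `F` a finite extension of `ℚ_q`, and `E` a
quadratic field extension of `F` with normalized valuation `v_E` (a surjective homomorphism
`E^× → ℤ` whose nonnegativity locus is exactly the units' integral part, i.e. whose
valuation ring is `O_E`).  Let `x ∈ E^×` with `N_{E/F}(x) ∈ (F^×)³`.  Then there is a unit
`u ∈ O_E^×` with `N_{E/F}(u) ∈ (O_F^×)³` and `x·u⁻¹ ∈ (E^×)³` iff `v_E(x) ≡ 0 (mod 3)`. -/
theorem stmt_6 (q : ℕ) [Fact q.Prime]
    (F E : Type) [Field F] [Field E]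
    [Algebra ℚ_[q] F] [FiniteDimensional ℚ_[q] F]
    [Algebra ℤ_[q] F] [IsScalarTower ℤ_[q] ℚ_[q] F]
    [Algebra F E] (hquad : Module.finrank F E = 2)
    [Algebra ℚ_[q] E] [IsScalarTower ℚ_[q] F E]
    [Algebra ℤ_[q] E] [IsScalarTower ℤ_[q] ℚ_[q] E]
    (vE : Eˣ →* Multiplicative ℤ) (hv_surj : Function.Surjective vE)
    (hv_ring : ∀ z : E, z ∈ integralClosure ℤ_[q] E ↔
      z = 0 ∨ ∃ zu : Eˣ, (zu : E) = z ∧ 0 ≤ Multiplicative.toAdd (vE zu))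
    (x : Eˣ) (hx : ∃ y : F, Algebra.norm F ((x : E)) = y ^ 3) :
    (∃ u : (integralClosure ℤ_[q] E)ˣ,
        (∃ w : (integralClosure ℤ_[q] F)ˣ,
          Algebra.norm F ((↑(u : (integralClosure ℤ_[q] E)) : E))
            = ((↑(w : (integralClosure ℤ_[q] F)) : F)) ^ 3) ∧
        ∃ z : E, (x : E) * ((↑(u : (integralClosure ℤ_[q] E)) : E))⁻¹ = z ^ 3) ↔
      Multiplicative.toAdd (vE x) % 3 = 0 := by
  have tow : IsScalarTower ℤ_[q] F E := by
    refine IsScalarTower.of_algebraMap_eq fun r => ?_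
    rw [IsScalarTower.algebraMap_apply ℤ_[q] ℚ_[q] E,
      IsScalarTower.algebraMap_apply ℤ_[q] ℚ_[q] F,
      IsScalarTower.algebraMap_apply ℚ_[q] F E]
  have hfd : FiniteDimensional F E := Module.finite_of_finrank_pos (by omega)
  have hint : ∀ z : Eˣ, (z : E) ∈ integralClosure ℤ_[q] E ↔
      0 ≤ Multiplicative.toAdd (vE z) := by
    intro z
    rw [hv_ring]
    constructor
    · rintro (h | ⟨zu, h, h'⟩)
      · exact absurd h z.ne_zero
      · rwa [Units.ext h] at h'
    · intro h
      exact Or.inr ⟨z, rfl, h⟩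
  constructor
  · rintro ⟨u, -, z, hz⟩
    let uE : Eˣ := Units.map (integralClosure ℤ_[q] E).val.toRingHom.toMonoidHom u
    have h1 : 0 ≤ Multiplicative.toAdd (vE uE) := (hint uE).1 (u : integralClosure ℤ_[q] E).2
    have h2 : 0 ≤ Multiplicative.toAdd (vE uE⁻¹) :=
      (hint uE⁻¹).1 ((u⁻¹ : (integralClosure ℤ_[q] E)ˣ) : integralClosure ℤ_[q] E).2
    rw [map_inv, toAdd_inv] at h2
    have hz' : ((x * uE⁻¹ : Eˣ) : E) = z ^ 3 := by
      rw [Units.val_mul, Units.val_inv_eq_inv_val]; exact hz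
    have hz0 : z ≠ 0 := by
      rintro rfl
      exact (x * uE⁻¹).ne_zero (by rw [hz']; simp)
    have hx' : x * uE⁻¹ = (Units.mk0 z hz0) ^ 3 := by
      ext; rw [hz']; simp
    have h3 := congrArg (fun t => Multiplicative.toAdd (vE t)) hx'
    simp only [map_mul, map_inv, map_pow, toAdd_mul, toAdd_inv, toAdd_pow, nsmul_eq_mul] at h3
    push_cast at h3
    omega
  · intro h
    obtain ⟨y, hy⟩ := hx
    obtain ⟨t, ht⟩ := hv_surj (Multiplicative.ofAdd (Multiplicative.toAdd (vE x) / 3))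
    let a : Eˣ := x * (t ^ 3)⁻¹
    have ha : Multiplicative.toAdd (vE a) = 0 := by
      simp only [a, map_mul, map_inv, map_pow, toAdd_mul, toAdd_inv, toAdd_pow, nsmul_eq_mul, ht,
        toAdd_ofAdd]
      push_cast
      omega
    have ha1 : (a : E) ∈ integralClosure ℤ_[q] E := (hint a).2 ha.ge
    have ha2 : ((a⁻¹ : Eˣ) : E) ∈ integralClosure ℤ_[q] E :=
      (hint a⁻¹).2 (by rw [map_inv, toAdd_inv, ha]; simp)
    have hinv : ∀ b : E, b ≠ 0 → Algebra.norm F b⁻¹ = (Algebra.norm F b)⁻¹ := by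
      intro b hb
      refine eq_inv_of_mul_eq_one_left ?_
      rw [← map_mul, inv_mul_cancel₀ hb, map_one]
    have hN : Algebra.norm F (a : E) = (y / Algebra.norm F (t : E)) ^ 3 := by
      simp only [a, Units.val_mul, Units.val_inv_eq_inv_val, Units.val_pow_eq_pow_val, map_mul]
      rw [hinv _ (pow_ne_zero 3 t.ne_zero), map_pow, hy, div_pow, div_eq_mul_inv]
    have hN' : Algebra.norm F ((a⁻¹ : Eˣ) : E) = ((y / Algebra.norm F (t : E))⁻¹) ^ 3 := by
      rw [Units.val_inv_eq_inv_val, hinv _ a.ne_zero, hN, inv_pow]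
    have hw0 : y / Algebra.norm F (t : E) ≠ 0 := by
      intro h0
      rw [h0] at hN
      exact (Algebra.norm_ne_zero_iff.2 a.ne_zero) (by rw [hN]; simp)
    have hw1 : y / Algebra.norm F (t : E) ∈ integralClosure ℤ_[q] F :=
      IsIntegral.of_pow (n := 3) (by norm_num) (hN ▸ Algebra.isIntegral_norm F ha1)
    have hw2 : (y / Algebra.norm F (t : E))⁻¹ ∈ integralClosure ℤ_[q] F :=
      IsIntegral.of_pow (n := 3) (by norm_num) (hN' ▸ Algebra.isIntegral_norm F ha2)
    refine ⟨⟨⟨a, ha1⟩, ⟨_, ha2⟩, Subtype.ext (by simp), Subtype.ext (by simp)⟩,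
      ⟨⟨⟨_, hw1⟩, ⟨_, hw2⟩, Subtype.ext (mul_inv_cancel₀ hw0),
        Subtype.ext (inv_mul_cancel₀ hw0)⟩, hN⟩, (t : E), ?_⟩
    have : x * a⁻¹ = t ^ 3 := by simp [a]
    have h5 := congrArg (fun s : Eˣ => (s : E)) this
    simpa only [Units.val_mul, Units.val_inv_eq_inv_val, Units.val_pow_eq_pow_val] using h5
end

section
/- Let F be a number field, p a prime number, and S a finite set of nonzero prime ideals of O_F. Then |dim_{𝔽_p} Cl(F)[p] − dim_{𝔽_p} Cl_S(F)[p]| ≤ 3|S|. -/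
open IsDedekindDomain NumberField

theorem aux_card_closure {G : Type*} [CommGroup G] [Finite G] (T : Finset G) (p : ℕ) (hp : 0 < p) :
    Nat.card (powMonoidHom p : Subgroup.closure (T : Set G) →* _).ker ≤ p ^ T.card := by
  set L := Subgroup.closure (T : Set G)
  rw [← Subgroup.index_range]
  set R := (powMonoidHom p : L →* L).range
  have h1 : Nat.card (L ⧸ R) ∣ _ := card_dvd_exponent_pow_rank (L ⧸ R)
  have h2 : Monoid.exponent (L ⧸ R) ∣ p := by
    apply Monoid.exponent_dvd_of_forall_pow_eq_one
    intro g
    obtain ⟨g, rfl⟩ := QuotientGroup.mk_surjective g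
    rw [← QuotientGroup.mk_pow, QuotientGroup.eq_one_iff]
    exact ⟨g, rfl⟩
  have h3 : Group.rank (L ⧸ R) ≤ T.card :=
    (Group.rank_le_of_surjective (QuotientGroup.mk' R) (QuotientGroup.mk'_surjective R)).trans
      (Subgroup.rank_closure_finset_le_card T)
  exact Nat.le_of_dvd (by positivity) ((h1.trans (pow_dvd_pow_of_dvd h2 _)).trans (pow_dvd_pow p h3))

theorem aux_group {G H : Type*} [CommGroup G] [CommGroup H] [Finite G] (φ : G →* H)
    (hφ : Function.Surjective φ) (T : Finset G) (hT : φ.ker ≤ Subgroup.closure (T : Set G))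
    (p : ℕ) (hp : 0 < p) :
    Nat.card {c : H // c ^ p = 1} ≤ Nat.card {c : G // c ^ p = 1} ∧
    Nat.card {c : G // c ^ p = 1} ≤ p ^ T.card * Nat.card {c : H // c ^ p = 1} := by
  have : Finite H := Finite.of_surjective φ hφ
  constructor
  · change Nat.card (powMonoidHom p : H →* H).ker ≤ Nat.card (powMonoidHom p : G →* G).ker
    rw [← Subgroup.index_range, ← Subgroup.index_range, ← Subgroup.index_comap_of_surjective _ hφ]
    refine Nat.le_of_dvd (Nat.pos_of_ne_zero Subgroup.index_ne_zero_of_finite)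
      (Subgroup.index_dvd_of_le ?_)
    rintro _ ⟨g, rfl⟩
    exact ⟨φ g, by simp⟩
  · let A := (powMonoidHom p : G →* G).ker
    let ψ : A →* H := φ.comp A.subtype
    have e : Nat.card ψ.ker * Nat.card ψ.range = Nat.card A := by
      rw [← Subgroup.index_ker]; exact Subgroup.card_mul_index _
    change Nat.card A ≤ _
    rw [← e]
    refine Nat.mul_le_mul ?_ ?_
    · refine le_trans ?_ (aux_card_closure T p hp)
      refine Nat.card_le_card_of_injective
        (fun x => ⟨⟨x.1.1, hT x.2⟩, Subtype.ext x.1.2⟩) ?_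
      intro x y h
      exact Subtype.ext (Subtype.ext (congrArg (fun z => z.1.1) h))
    · refine Nat.card_le_card_of_injective
        (fun x => ⟨x.1, ?_⟩) ?_
      · obtain ⟨_, a, rfl⟩ := x
        have : (a : G) ^ p = 1 := a.2
        simp [ψ, ← map_pow, this]
      · intro x y h
        exact Subtype.ext (congrArg (fun z => z.1) h)

open scoped nonZeroDivisors

theorem aux_mem {R : Type*} [CommRing R] [IsDedekindDomain R]
    (S : Finset (HeightOneSpectrum R)) (a : R)
    (ha : ∀ v : HeightOneSpectrum R, a ∈ v.asIdeal → v ∈ S)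
    (L : Subgroup (ClassGroup R))
    (hL : ∀ v ∈ S, ClassGroup.mk0 ⟨v.asIdeal, mem_nonZeroDivisors_iff_ne_zero.2 v.ne_bot⟩ ∈ L)
    (k : ℕ) (C : Ideal R) : ∀ (hC : C ∈ (Ideal R)⁰), a ^ k ∈ C → ClassGroup.mk0 ⟨C, hC⟩ ∈ L := by
  induction C using UniqueFactorizationMonoid.induction_on_prime with
  | h₁ => intro hC; simp at hC
  | h₂ x hx =>
    intro hC _
    rw [(ClassGroup.mk0_eq_one_iff hC).2]
    · exact L.one_mem
    · rw [Ideal.isUnit_iff.1 hx]; infer_instance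
  | h₃ I P hI hP ih =>
    intro hC hk
    have hP' : P ∈ (Ideal R)⁰ := mem_nonZeroDivisors_iff_ne_zero.2 hP.ne_zero
    have hI' : I ∈ (Ideal R)⁰ := mem_nonZeroDivisors_iff_ne_zero.2 hI
    have : (⟨P * I, hC⟩ : (Ideal R)⁰) = ⟨P, hP'⟩ * ⟨I, hI'⟩ := rfl
    rw [this, map_mul]
    have hkI : a ^ k ∈ I := (Ideal.mul_le_right : P * I ≤ I) hk
    have hkP : a ^ k ∈ P := (Ideal.mul_le_left : P * I ≤ P) hk
    refine L.mul_mem ?_ (ih hI' hkI)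
    have hPp := Ideal.isPrime_of_prime hP
    exact hL ⟨P, hPp, hP.ne_zero⟩ (ha _ (hPp.mem_of_pow_mem _ hkP))

theorem aux_loc {R B : Type*} [CommRing R] [IsDedekindDomain R] [CommRing B] [IsDomain B]
    [Algebra R B] [Module.IsTorsionFree R B]
    (S : Finset (HeightOneSpectrum R)) (a : R) (ha0 : a ≠ 0)
    (ha : ∀ v : HeightOneSpectrum R, a ∈ v.asIdeal → v ∈ S)
    [IsLocalization.Away a B]
    (L : Subgroup (ClassGroup R))
    (hL : ∀ v ∈ S, ClassGroup.mk0 ⟨v.asIdeal, mem_nonZeroDivisors_iff_ne_zero.2 v.ne_bot⟩ ∈ L) :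
    Function.Surjective (ClassGroup.extendedHom R B) ∧ (ClassGroup.extendedHom R B).ker ≤ L := by
  have hM : Submonoid.powers a ≤ R⁰ := powers_le_nonZeroDivisors_of_noZeroDivisors ha0
  have : IsDedekindDomain B := IsLocalization.isDedekindDomain R hM B
  constructor
  · intro c
    obtain ⟨J, rfl⟩ := ClassGroup.mk0_surjective c
    have e := IsLocalization.map_under (Submonoid.powers a) B J.1
    have hI : J.1.under R ∈ (Ideal R)⁰ := by
      refine mem_nonZeroDivisors_iff_ne_zero.2 fun h => ?_
      rw [h] at e
      refine nonZeroDivisors.ne_zero J.2 ?_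
      rw [← e]; simp
    refine ⟨ClassGroup.mk0 ⟨_, hI⟩, ?_⟩
    rw [ClassGroup.extendedHom_mk0]
    congr 1
    exact Subtype.ext e
  · intro c hc
    obtain ⟨⟨I, hI⟩, rfl⟩ := ClassGroup.mk0_surjective c
    rw [MonoidHom.mem_ker, ClassGroup.extendedHom_mk0,
      ClassGroup.mk0_eq_one_iff] at hc
    have hI0 : I.map (algebraMap R B) ≠ 0 :=
      nonZeroDivisors.ne_zero (ClassGroup.extendedIdeal R B ⟨I, hI⟩).2
    obtain ⟨x, hx⟩ := hc
    change I.map (algebraMap R B) = Ideal.span {x} at hx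
    have hxI : x ∈ I.map (algebraMap R B) := by rw [hx]; exact Ideal.mem_span_singleton_self x
    obtain ⟨⟨i, m⟩, him⟩ := (IsLocalization.mem_map_algebraMap_iff (Submonoid.powers a) B).1 hxI
    dsimp only at him
    have hmap : (Ideal.span {(i : R)}).map (algebraMap R B) = I.map (algebraMap R B) := by
      rw [Ideal.map_span, Set.image_singleton, ← him, hx]
      exact Ideal.span_singleton_mul_right_unit (IsLocalization.map_units B m) x
    obtain ⟨C, hC⟩ : I ∣ Ideal.span {(i : R)} :=
      Ideal.dvd_iff_le.2 ((Ideal.span_singleton_le_iff_mem _).2 i.2)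
    have hi0 : (Ideal.span {(i : R)}) ≠ 0 := by
      intro h
      rw [h] at hmap
      exact hI0 (hmap.symm.trans (by simp))
    have hC0 : C ∈ (Ideal R)⁰ := mem_nonZeroDivisors_iff_ne_zero.2 (by
      rintro rfl; exact hi0 (by rw [hC, mul_zero]))
    have hCtop : C.map (algebraMap R B) = 1 := by
      rw [hC, Ideal.map_mul] at hmap
      exact mul_left_cancel₀ hI0 (by rw [hmap, mul_one])
    have h1 : algebraMap R B 1 ∈ C.map (algebraMap R B) := by
      rw [hCtop, Ideal.one_eq_top]; trivial
    rw [IsLocalization.algebraMap_mem_map_algebraMap_iff (Submonoid.powers a)] at h1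
    obtain ⟨_, ⟨k, rfl⟩, hk⟩ := h1
    have hCL := aux_mem S a ha L hL k C hC0 (by simpa using hk)
    have hprod : ClassGroup.mk0 ⟨I, hI⟩ * ClassGroup.mk0 ⟨C, hC0⟩ = 1 := by
      rw [← map_mul]
      refine (ClassGroup.mk0_eq_one_iff _).2 ?_
      change (I * C).IsPrincipal
      rw [← hC]; exact ⟨_, rfl⟩
    rw [eq_inv_of_mul_eq_one_left hprod]
    exact L.inv_mem hCL

theorem aux_exists {R : Type*} [CommRing R] [IsDedekindDomain R] [Finite (ClassGroup R)]
    (S : Finset (HeightOneSpectrum R)) :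
    ∃ a : R, a ≠ 0 ∧ ∀ v : HeightOneSpectrum R, a ∈ v.asIdeal ↔ v ∈ S := by
  classical
  let I : Ideal R := ∏ v ∈ S, v.asIdeal
  have hI0 : I ≠ 0 := Finset.prod_ne_zero_iff.2 fun v _ => v.ne_bot
  have hI : I ∈ (Ideal R)⁰ := mem_nonZeroDivisors_iff_ne_zero.2 hI0
  have h : ClassGroup.mk0 (⟨I, hI⟩ ^ Nat.card (ClassGroup R)) = 1 := by
    rw [map_pow, pow_card_eq_one']
  rw [ClassGroup.mk0_eq_one_iff] at h
  obtain ⟨a, ha⟩ := h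
  change I ^ _ = Ideal.span {a} at ha
  have hc : Nat.card (ClassGroup R) ≠ 0 := Nat.card_pos.ne'
  refine ⟨a, ?_, fun v => ?_⟩
  · rintro rfl
    exact pow_ne_zero _ hI0 (ha.trans (by simp))
  · rw [← Ideal.span_singleton_le_iff_mem, ← ha, v.isPrime.pow_le_iff hc, v.isPrime.prod_le]
    constructor
    · rintro ⟨w, hw, hwv⟩
      have : w = v := HeightOneSpectrum.ext (w.isMaximal.eq_of_le v.isPrime.ne_top hwv)
      exact this ▸ hw
    · intro hv; exact ⟨v, hv, le_rfl⟩

theorem aux_away {R K : Type*} [CommRing R] [IsDedekindDomain R] [Field K] [Algebra R K]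
    [IsFractionRing R K] (S : Finset (HeightOneSpectrum R)) (a : R) (ha0 : a ≠ 0)
    (ha : ∀ v : HeightOneSpectrum R, a ∈ v.asIdeal ↔ v ∈ S) :
    IsLocalization.Away a ((S : Set (HeightOneSpectrum R)).integer K) := by
  have hinj := IsFractionRing.injective R K
  have haK : algebraMap R K a ≠ 0 := by simpa using ha0
  refine IsLocalization.Away.mk a ?_ ?_ ?_
  · refine IsUnit.of_mul_eq_one (⟨(algebraMap R K a)⁻¹, ?_⟩ :
      (S : Set (HeightOneSpectrum R)).integer K) ?_
    · intro v hv
      have : v.valuation K (algebraMap R K a) = 1 :=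
        (HeightOneSpectrum.valuation_eq_one_iff_notMem v).2 (fun h => hv ((ha v).1 h))
      rw [map_inv₀, this, inv_one]
    · exact Subtype.ext (mul_inv_cancel₀ haK)
  · rintro ⟨x, hx⟩
    have key : ∀ v ∈ S, ∃ n : ℕ, v.valuation K x ≤ ((v.valuation K (algebraMap R K a))⁻¹) ^ n := by
      intro v hv
      refine MulArchimedean.arch _ ?_
      have : v.valuation K (algebraMap R K a) < 1 :=
        (HeightOneSpectrum.valuation_lt_one_iff_mem v a).2 ((ha v).2 hv)
      exact (one_lt_inv₀ ((Valuation.pos_iff _).2 haK)).2 this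
    choose! n hn using key
    have hmem : x * algebraMap R K a ^ (S.sup n) ∈ (algebraMap R K).range := by
      apply HeightOneSpectrum.mem_integers_of_valuation_le_one
      intro v
      have hpos : 0 < v.valuation K (algebraMap R K a) := (Valuation.pos_iff _).2 haK
      have hle : v.valuation K (algebraMap R K a) ≤ 1 := v.valuation_le_one a
      rw [map_mul, map_pow]
      by_cases hv : v ∈ S
      · calc _ ≤ ((v.valuation K (algebraMap R K a))⁻¹) ^ n v *
              (v.valuation K (algebraMap R K a)) ^ n v :=
              mul_le_mul' (hn v hv) (pow_le_pow_right_of_le_one' hle (Finset.le_sup hv))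
          _ = 1 := by rw [← mul_pow, inv_mul_cancel₀ hpos.ne', one_pow]
      · exact mul_le_one' (hx v hv) (pow_le_one' hle _)
    obtain ⟨r, hr⟩ := hmem
    exact ⟨S.sup n, r, Subtype.ext hr.symm⟩
  · intro b c h
    exact ⟨0, by rw [hinj (congrArg Subtype.val h)]⟩

theorem stmt_14 (F : Type) [Field F] [NumberField F] (p : ℕ) (hp : p.Prime)
    (S : Finset (HeightOneSpectrum (RingOfIntegers F))) (d₁ d₂ : ℕ)
    (h₁ : Nat.card {c : ClassGroup (RingOfIntegers F) // c ^ p = 1} = p ^ d₁)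
    (h₂ : Nat.card
        {c : ClassGroup ((S : Set (HeightOneSpectrum (RingOfIntegers F))).integer F) //
          c ^ p = 1} = p ^ d₂) :
    |(d₁ : ℤ) - (d₂ : ℤ)| ≤ 3 * S.card := by
  classical
  obtain ⟨a, ha0, ha⟩ := aux_exists S
  have := aux_away (K := F) S a ha0 ha
  let T : Finset (ClassGroup (RingOfIntegers F)) := S.image fun v =>
    ClassGroup.mk0 ⟨v.asIdeal, mem_nonZeroDivisors_iff_ne_zero.2 v.ne_bot⟩
  obtain ⟨hs, hk⟩ := aux_loc (B := (S : Set (HeightOneSpectrum (RingOfIntegers F))).integer F)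
    S a ha0 (fun v => (ha v).1) (Subgroup.closure (T : Set _)) (fun v hv =>
      Subgroup.subset_closure (Finset.mem_coe.2 (Finset.mem_image_of_mem _ hv)))
  obtain ⟨e1, e2⟩ := aux_group _ hs T hk p hp.pos
  rw [h₁, h₂] at e1 e2
  rw [← pow_add] at e2
  have f1 := (Nat.pow_le_pow_iff_right hp.one_lt).1 e1
  have f2 := (Nat.pow_le_pow_iff_right hp.one_lt).1 e2
  have f3 : T.card ≤ S.card := Finset.card_image_le
  rw [abs_le]
  constructor <;> lia
end
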